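/- Let N be a natural number, let a_1, ..., a_N be distinct positive real numbers, and let A_1, ..., A_N be positive real numbers. Then every eigenvalue of the weighted Cauchy matrix C_{a,A} is simple; equivalently, C_{a,A} has N distinct (positive) eigenvalues, i.e., each eigenspace of C_{a,A} is one-dimensional. -/

import Mathlib

/-!
Write `C` for the weighted Cauchy matrix, `D = diag(a)` and `v = (√A_1, ..., √A_N)`. The argument
rests on the Sylvester equation `D C + C D = v v*`. The eigenvalues of `C` are real, so pairing
this equation with an eigenvector `C x = μ x` gives `|v* x|² = 2 μ (x* D x)`, and `x* D x > 0`.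

For `μ ≠ 0` it follows that `(D C + C D) x ≠ 0`. The matrix `D C + C D`, of rank at most one, is
therefore injective on the eigenspace, which is at most one-dimensional.

For `μ = 0` it follows that `v* x = 0`, and then `C (D x) = 0` by the Sylvester equation. So the
kernel of `C` is `D`-invariant and contained in that of `v*`, whence `∑ √A_k x_k a_k ^ n = 0` for
all `n`. As the `a_k` are distinct, the Vandermonde determinant forces `x = 0`, and `0` is not an
eigenvalue.
-/

open Matrix MeasureTheory
open scoped ComplexOrder

/-- The weighted Cauchy matrix `C_{a,A} = (√(A_j A_k)/(a_j + a_k))_{j,k}`, as a complex matrix. -/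
noncomputable def cauchyMatrix {N : ℕ} (a A : Fin N → ℝ) : Matrix (Fin N) (Fin N) ℂ :=
  Matrix.of fun j k => ((Real.sqrt (A j * A k) / (a j + a k) : ℝ) : ℂ)

/-- The vector `v_A = (√A_1, ..., √A_N)` in `ℂ^N`. -/
noncomputable def vecA {N : ℕ} (A : Fin N → ℝ) : Fin N → ℂ :=
  fun k => ((Real.sqrt (A k) : ℝ) : ℂ)

section Lyapunov

open Module Module.End

variable {n : Type*} [Fintype n]

lemma star_dotProduct_lyapunov_mulVec_of_eigenvector {R : Type*} [CommSemiring R] [StarRing R]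
    {C : Matrix n n R} (D : Matrix n n R) {μ : R} {x : n → R} (hx : C *ᵥ x = μ • x) :
    star x ⬝ᵥ ((D * C + Cᴴ * D) *ᵥ x) = (μ + star μ) * (star x ⬝ᵥ D *ᵥ x) := by
  have h_right : star x ⬝ᵥ ((D * C) *ᵥ x) = μ * (star x ⬝ᵥ D *ᵥ x) := by
    rw [← mulVec_mulVec, hx, mulVec_smul, dotProduct_smul, smul_eq_mul]
  have h_left : star x ⬝ᵥ ((Cᴴ * D) *ᵥ x) = star μ * (star x ⬝ᵥ D *ᵥ x) := by
    rw [← mulVec_mulVec, dotProduct_mulVec, ← star_mulVec, hx, star_smul, smul_dotProduct,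
      smul_eq_mul]
  rw [add_mulVec, dotProduct_add, h_right, h_left, add_mul]

lemma finrank_eigenspace_le_rank_lyapunov [DecidableEq n] {K : Type*} [Field K] [PartialOrder K]
    [StarRing K] (C : Matrix n n K) {D : Matrix n n K} (hD : D.PosDef) {μ : K}
    (hμ : μ + star μ ≠ 0) :
    finrank K (eigenspace (toLin' C) μ) ≤ (D * C + Cᴴ * D).rank := by
  let Q := (D * C + Cᴴ * D).mulVecLin
  have h_inj : Function.Injective (Q.rangeRestrict ∘ₗ (eigenspace (toLin' C) μ).subtype) := by
    rw [injective_iff_map_eq_zero]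
    rintro ⟨x, hx⟩ h
    have hCx : C *ᵥ x = μ • x := mem_eigenspace_iff.1 hx
    have hQx : (D * C + Cᴴ * D) *ᵥ x = 0 := congrArg Subtype.val h
    have h_zero : (μ + star μ) * (star x ⬝ᵥ D *ᵥ x) = 0 := by
      rw [← star_dotProduct_lyapunov_mulVec_of_eigenvector D hCx, hQx, dotProduct_zero]
    have hDx : star x ⬝ᵥ D *ᵥ x = 0 := (mul_eq_zero.1 h_zero).resolve_left hμ
    have hx0 : x = 0 := by_contra fun hne => (hD.dotProduct_mulVec_pos hne).ne' hDx
    exact Subtype.ext hx0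
  exact LinearMap.finrank_le_finrank_of_injective h_inj

lemma eq_zero_of_forall_dotProduct_diagonal_pow_mulVec_eq_zero {R : Type*} [CommRing R]
    [IsDomain R] [DecidableEq n] {d v x : n → R} (hd : Function.Injective d) (hv : ∀ i, v i ≠ 0)
    (h : ∀ k : ℕ, v ⬝ᵥ (diagonal d ^ k *ᵥ x) = 0) : x = 0 := by
  let e := Fintype.equivFin n
  have h_weighted : (fun i => v (e.symm i) * x (e.symm i)) = 0 := by
    refine eq_zero_of_forall_pow_sum_mul_pow_eq_zero (hd.comp e.symm.injective) fun k => ?_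
    refine (e.symm.sum_comp fun i => v i * x i * d i ^ (k : ℕ)).trans ?_
    rw [← h k, diagonal_pow]
    exact Finset.sum_congr rfl fun i _ => by rw [mulVec_diagonal, Pi.pow_apply]; ring
  funext i
  have h_i : v i * x i = 0 := by simpa using congrFun h_weighted (e i)
  exact (mul_eq_zero.1 h_i).resolve_left (hv i)

variable {𝕜 : Type*} [RCLike 𝕜] {C D : Matrix n n 𝕜}

lemma star_eq_self_of_isHermitian_of_hasEigenvalue [DecidableEq n] (hC : C.IsHermitian) {μ : 𝕜}
    (hμ : HasEigenvalue (toLin' C) μ) : star μ = μ := by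
  have h_spec : μ ∈ spectrum 𝕜 C := spectrum_toLin' C ▸ hμ.mem_spectrum
  rw [hC.spectrum_eq_image_range] at h_spec
  obtain ⟨r, -, rfl⟩ := h_spec
  exact RCLike.conj_ofReal r

lemma finrank_eigenspace_le_rank_anticommutator [DecidableEq n] (hC : C.IsHermitian)
    (hD : D.PosDef) {μ : 𝕜} (hμ : HasEigenvalue (toLin' C) μ) (hμ0 : μ ≠ 0) :
    finrank 𝕜 (eigenspace (toLin' C) μ) ≤ (D * C + C * D).rank := by
  have h_re : μ + star μ ≠ 0 := by
    rw [star_eq_self_of_isHermitian_of_hasEigenvalue hC hμ, ← two_mul]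
    exact mul_ne_zero two_ne_zero hμ0
  simpa only [hC.eq] using finrank_eigenspace_le_rank_lyapunov C hD h_re

lemma lyapunov_mulVec_eq_zero_of_mulVec_eq_zero (hQ : (D * C + Cᴴ * D).PosSemidef) {x : n → 𝕜}
    (hx : C *ᵥ x = 0) : (D * C + Cᴴ * D) *ᵥ x = 0 := by
  have hx' : C *ᵥ x = (0 : 𝕜) • x := by rw [hx, zero_smul]
  rw [← hQ.dotProduct_mulVec_zero_iff, star_dotProduct_lyapunov_mulVec_of_eigenvector D hx',
    star_zero, add_zero, zero_mul]

lemma anticommutator_mulVec_eq_zero_of_mulVec_eq_zero (hC : C.IsHermitian)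
    (hQ : (D * C + C * D).PosSemidef) {x : n → 𝕜} (hx : C *ᵥ x = 0) :
    (D * C + C * D) *ᵥ x = 0 := by
  rw [← congrArg (D * C + · * D) hC.eq] at hQ ⊢
  exact lyapunov_mulVec_eq_zero_of_mulVec_eq_zero hQ hx

lemma mulVec_pow_mulVec_eq_zero [DecidableEq n] (hC : C.IsHermitian)
    (hQ : (D * C + C * D).PosSemidef) {x : n → 𝕜} (hx : C *ᵥ x = 0) (k : ℕ) :
    C *ᵥ (D ^ k *ᵥ x) = 0 := by
  induction k with
  | zero => rwa [pow_zero, one_mulVec]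
  | succ k ih =>
    have h_anticomm := anticommutator_mulVec_eq_zero_of_mulVec_eq_zero hC hQ ih
    rwa [add_mulVec, ← mulVec_mulVec, ih, mulVec_zero, zero_add, ← mulVec_mulVec,
      mulVec_mulVec x D, ← pow_succ'] at h_anticomm

lemma eq_zero_of_mulVec_eq_zero_of_sylvester [DecidableEq n] (hC : C.IsHermitian) {d v x : n → 𝕜}
    (h_sylvester : diagonal d * C + C * diagonal d = vecMulVec v (star v))
    (hd : Function.Injective d) (hv : ∀ i, v i ≠ 0) (hx : C *ᵥ x = 0) : x = 0 := by
  have hQ : (diagonal d * C + C * diagonal d).PosSemidef :=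
    h_sylvester ▸ posSemidef_vecMulVec_self_star v
  refine eq_zero_of_forall_dotProduct_diagonal_pow_mulVec_eq_zero (v := star v) hd
    (fun i => star_ne_zero.2 (hv i)) fun k => ?_
  have h_rank_one : vecMulVec v (star v) *ᵥ (diagonal d ^ k *ᵥ x) = 0 :=
    h_sylvester ▸ anticommutator_mulVec_eq_zero_of_mulVec_eq_zero hC hQ
      (mulVec_pow_mulVec_eq_zero hC hQ hx k)
  rw [vecMulVec_mulVec] at h_rank_one
  rcases smul_eq_zero.1 h_rank_one with h_dot | h_v
  · exact MulOpposite.op_injective h_dot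
  · rw [h_v, star_zero, zero_dotProduct]

end Lyapunov

section Cauchy

variable {N : ℕ} {a A : Fin N → ℝ}

lemma cauchyMatrix_isHermitian (a A : Fin N → ℝ) : (cauchyMatrix a A).IsHermitian := by
  ext j k
  simp [cauchyMatrix, mul_comm, add_comm]

lemma cauchyMatrix_sylvester (ha_sum : ∀ j k, a j + a k ≠ 0) (hA : ∀ k, 0 ≤ A k) :
    diagonal (fun k => (a k : ℂ)) * cauchyMatrix a A
      + cauchyMatrix a A * diagonal (fun k => (a k : ℂ)) = vecMulVec (vecA A) (star (vecA A)) := by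
  ext j k
  have h_sum : (a j : ℂ) + a k ≠ 0 := mod_cast ha_sum j k
  simp only [Matrix.add_apply, diagonal_mul, mul_diagonal, cauchyMatrix, of_apply, vecMulVec_apply,
    vecA, Pi.star_apply, RCLike.star_def, Complex.conj_ofReal, Real.sqrt_mul (hA j)]
  push_cast
  field_simp

lemma eq_zero_of_cauchyMatrix_mulVec_eq_zero (ha : Function.Injective a)
    (ha_sum : ∀ j k, a j + a k ≠ 0) (hA : ∀ k, 0 < A k) {x : Fin N → ℂ}
    (hx : cauchyMatrix a A *ᵥ x = 0) : x = 0 := by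
  have hv : ∀ k, vecA A k ≠ 0 := fun k => Complex.ofReal_ne_zero.2 (Real.sqrt_pos.2 (hA k)).ne'
  exact eq_zero_of_mulVec_eq_zero_of_sylvester (cauchyMatrix_isHermitian a A)
    (cauchyMatrix_sylvester ha_sum fun k => (hA k).le) (Complex.ofReal_injective.comp ha) hv hx

end Cauchy

/-- Every eigenvalue of the weighted Cauchy matrix is simple: each eigenspace
of `C_{a,A}` (for an actual eigenvalue) is one-dimensional. -/
theorem cauchyMatrix_eigenvalues_simple (N : ℕ) (a A : Fin N → ℝ)
    (ha : Function.Injective a) (ha0 : ∀ k, 0 < a k) (hA : ∀ k, 0 < A k) :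
    ∀ μ : ℂ, Module.End.HasEigenvalue (Matrix.toLin' (cauchyMatrix a A)) μ →
      Module.finrank ℂ ↥(Module.End.eigenspace (Matrix.toLin' (cauchyMatrix a A)) μ) = 1 := by
  intro μ hμ
  have ha_sum : ∀ j k, a j + a k ≠ 0 := fun j k => (add_pos (ha0 j) (ha0 k)).ne'
  have hμ0 : μ ≠ 0 := by
    rintro rfl
    obtain ⟨x, hx⟩ := hμ.exists_hasEigenvector
    have hCx : cauchyMatrix a A *ᵥ x = 0 := by simpa using hx.apply_eq_smul
    exact hx.2 (eq_zero_of_cauchyMatrix_mulVec_eq_zero ha ha_sum hA hCx)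
  have hD : (diagonal fun k => (a k : ℂ)).PosDef :=
    PosDef.diagonal fun k => by exact_mod_cast ha0 k
  apply le_antisymm
  · have hC := cauchyMatrix_isHermitian a A
    have h_rank := finrank_eigenspace_le_rank_anticommutator hC hD hμ hμ0
    rw [cauchyMatrix_sylvester ha_sum fun k => (hA k).le] at h_rank
    exact h_rank.trans (rank_vecMulVec_le _ _)
  · have : Nontrivial (Module.End.eigenspace (toLin' (cauchyMatrix a A)) μ) :=
      Submodule.nontrivial_iff_ne_bot.2 hμ
    exact Module.finrank_pos
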